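/- arXiv:2509.15822 — 4 statements merged into one kernel-verified Lean document; each statement's English description precedes it below -/
import Mathlib

section
/- Assume q ≤ 1/2, q + 2λ ≤ 1, λ > 0, and 0 < q. For any connected template G = (V,E) and any labeling π ∈ Π_V: | E[P_{G,π}] / √(E[P_{G,π}²]) | ≤ min( K^{−(|V|−1)}·(λ/√q̄)^{|E|} , λ^{|E|/2} / K^{(|V|−1)/2} ). -/
/-!
Given the labels, the edges are independent, and a recentered edge has conditional mean `λ` or `0`
according to whether the labels of its endpoints agree. Hence for any set `S` of edges the mean of
the monomial is `λ^{|S|}` times the probability that the labels agree along all of `S`; when `S` is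
the image of a connected template, this is the probability `K^{-(|V|-1)}` that `|V|` uniform labels
coincide. The conditional second moment of an edge is `q̄` or `p̄ = q̄ + λ(1-2q)`.
It is at least `q̄` because `q ≤ 1/2`, and at least the conditional mean because `q + 2λ ≤ 1`.
So the second moment of the monomial dominates both `q̄^{|S|}` and the mean `m`, and the two
bounds are `m / √(q̄^{|S|})` and `m / √m = √m`.
-/

open Classical Finset

noncomputable section

namespace SBM

/-- Index type for the edge slots of a graph on `n` nodes: ordered pairs `i < j`. -/
abbrev Pairs (n : ℕ) := {p : Fin n × Fin n // p.1 < p.2}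

/-- A configuration of edges: one Boolean per pair `i < j`. -/
abbrev EdgeConf (n : ℕ) := Pairs n → Bool

/-- Community labels of the `n` nodes, with `K` communities. -/
abbrev Lab (n K : ℕ) := Fin n → Fin K

/-- The recentered symmetric adjacency entries `Y i j = Y*_{ij} - q` (and `0` on the diagonal). -/
def Ymat (n : ℕ) (q : ℝ) (y : EdgeConf n) (i j : Fin n) : ℝ :=
  if h : i = j then 0
  else (if y ⟨(min i j, max i j), min_lt_max.mpr h⟩ then 1 else 0) - q

/-- Conditional connection probability of a pair given the labels. -/
def pEdge (n K : ℕ) (q lam : ℝ) (z : Lab n K) (p : Pairs n) : ℝ :=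
  if z p.1.1 = z p.1.2 then q + lam else q

/-- SBM probability weight of a configuration `(z, y)`: labels are i.i.d. uniform on `Fin K`
and, conditionally on `z`, edges are independent Bernoulli. -/
def wt (n K : ℕ) (q lam : ℝ) (z : Lab n K) (y : EdgeConf n) : ℝ :=
  ((K : ℝ)⁻¹) ^ n *
    ∏ p : Pairs n, (if y p then pEdge n K q lam z p else 1 - pEdge n K q lam z p)

/-- Expectation under the SBM. -/
def expec (n K : ℕ) (q lam : ℝ) (F : Lab n K → EdgeConf n → ℝ) : ℝ :=
  ∑ z : Lab n K, ∑ y : EdgeConf n, wt n K q lam z y * F z y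

/-- Expectation conditionally on `z i = z j`. -/
def expecEq (n K : ℕ) (q lam : ℝ) (i j : Fin n) (F : Lab n K → EdgeConf n → ℝ) : ℝ :=
  expec n K q lam (fun z y => if z i = z j then F z y else 0) /
    expec n K q lam (fun z _ => if z i = z j then 1 else 0)

/-- Expectation conditionally on `z i ≠ z j`. -/
def expecNe (n K : ℕ) (q lam : ℝ) (i j : Fin n) (F : Lab n K → EdgeConf n → ℝ) : ℝ :=
  expec n K q lam (fun z y => if z i ≠ z j then F z y else 0) /
    expec n K q lam (fun z _ => if z i ≠ z j then 1 else 0)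

/-- Variance conditionally on `z i = z j`. -/
def varEq (n K : ℕ) (q lam : ℝ) (i j : Fin n) (F : Lab n K → EdgeConf n → ℝ) : ℝ :=
  expecEq n K q lam i j (fun z y => F z y ^ 2) - expecEq n K q lam i j F ^ 2

/-- Variance conditionally on `z i ≠ z j`. -/
def varNe (n K : ℕ) (q lam : ℝ) (i j : Fin n) (F : Lab n K → EdgeConf n → ℝ) : ℝ :=
  expecNe n K q lam i j (fun z y => F z y ^ 2) - expecNe n K q lam i j F ^ 2

/-- The (centered) membership indicator `x = 1{z i0 = z i1} - 1/K`. -/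
def xind (n K : ℕ) (i0 i1 : Fin n) (z : Lab n K) : ℝ :=
  (if z i0 = z i1 then 1 else 0) - 1 / K

/-- A template: a finite simple graph on `Fin v` (edges stored as ordered pairs `a < b`)
with the two distinguished nodes `0` and `1`. -/
structure Template where
  v : ℕ
  hv : 2 ≤ v
  E : Finset (Fin v × Fin v)
  hE : ∀ e ∈ E, e.1 < e.2

namespace Template

/-- First distinguished node. -/
def v1 (T : Template) : Fin T.v := ⟨0, by have := T.hv; omega⟩

/-- Second distinguished node. -/
def v2 (T : Template) : Fin T.v := ⟨1, by have := T.hv; omega⟩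

/-- The underlying simple graph of a template. -/
def graph (T : Template) : SimpleGraph (Fin T.v) :=
  SimpleGraph.fromRel fun a b => (a, b) ∈ T.E

end Template

/-- Labelings `Π_V`: injections sending the distinguished nodes to the nodes `0` and `1`. -/
def PiV (n : ℕ) (hn : 2 ≤ n) (T : Template) : Finset (Fin T.v ↪ Fin n) :=
  Finset.univ.filter fun π =>
    π T.v1 = (⟨0, by omega⟩ : Fin n) ∧ π T.v2 = (⟨1, by omega⟩ : Fin n)

/-- The monomial `P_{G,π}(Y) = ∏_{(u,w) ∈ E} Y_{π u, π w}`. -/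
def PG (n : ℕ) (q : ℝ) (T : Template) (π : Fin T.v ↪ Fin n) (y : EdgeConf n) : ℝ :=
  ∏ e ∈ T.E, Ymat n q y (π e.1) (π e.2)

/-- A matching between the node sets of two templates: no node appears twice. -/
def IsMatching (T1 T2 : Template) (M : Finset (Fin T1.v × Fin T2.v)) : Prop :=
  (∀ p ∈ M, ∀ p' ∈ M, (p : Fin T1.v × Fin T2.v).1 = (p' : Fin T1.v × Fin T2.v).1 → p = p') ∧
  (∀ p ∈ M, ∀ p' ∈ M, (p : Fin T1.v × Fin T2.v).2 = (p' : Fin T1.v × Fin T2.v).2 → p = p')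

/-- `Π(M)`: pairs of labelings compatible with the matching `M`. -/
def PiM (n : ℕ) (hn : 2 ≤ n) (T1 T2 : Template) (M : Finset (Fin T1.v × Fin T2.v)) :
    Set ((Fin T1.v ↪ Fin n) × (Fin T2.v ↪ Fin n)) :=
  {pp | pp.1 ∈ PiV n hn T1 ∧ pp.2 ∈ PiV n hn T2 ∧
    ∀ (a : Fin T1.v) (b : Fin T2.v), pp.1 a = pp.2 b ↔ (a, b) ∈ M}

/-- An edge of `T1` is matched if its two endpoints are matched to the endpoints of an
edge of `T2`. -/
def EdgeMatched1 (T1 T2 : Template) (M : Finset (Fin T1.v × Fin T2.v))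
    (e : Fin T1.v × Fin T1.v) : Prop :=
  ∃ e' ∈ T2.E, ((e.1, e'.1) ∈ M ∧ (e.2, e'.2) ∈ M) ∨ ((e.1, e'.2) ∈ M ∧ (e.2, e'.1) ∈ M)

/-- An edge of `T2` is matched if its two endpoints are matched to the endpoints of an
edge of `T1`. -/
def EdgeMatched2 (T1 T2 : Template) (M : Finset (Fin T1.v × Fin T2.v))
    (e' : Fin T2.v × Fin T2.v) : Prop :=
  ∃ e ∈ T1.E, ((e.1, e'.1) ∈ M ∧ (e.2, e'.2) ∈ M) ∨ ((e.1, e'.2) ∈ M ∧ (e.2, e'.1) ∈ M)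

/-- `|E_Δ|`: the number of unmatched edges (in either template). -/
def EDeltaCard (T1 T2 : Template) (M : Finset (Fin T1.v × Fin T2.v)) : ℕ :=
  (T1.E.filter fun e => ¬ EdgeMatched1 T1 T2 M e).card +
    (T2.E.filter fun e => ¬ EdgeMatched2 T1 T2 M e).card

/-- `|U^{(1)}|`: the number of unmatched nodes of the first template. -/
def U1card (T1 T2 : Template) (M : Finset (Fin T1.v × Fin T2.v)) : ℕ :=
  (Finset.univ.filter fun a : Fin T1.v => ∀ p ∈ M, (p : Fin T1.v × Fin T2.v).1 ≠ a).card

/-- `|U^{(2)}|`: the number of unmatched nodes of the second template. -/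
def U2card (T1 T2 : Template) (M : Finset (Fin T1.v × Fin T2.v)) : ℕ :=
  (Finset.univ.filter fun b : Fin T2.v => ∀ p ∈ M, (p : Fin T1.v × Fin T2.v).2 ≠ b).card

/-- A pair of matched nodes is semi-matched if one of them is incident to an unmatched edge. -/
def IsSemiMatched (T1 T2 : Template) (M : Finset (Fin T1.v × Fin T2.v))
    (p : Fin T1.v × Fin T2.v) : Prop :=
  (∃ e ∈ T1.E, (e.1 = p.1 ∨ e.2 = p.1) ∧ ¬ EdgeMatched1 T1 T2 M e) ∨
  (∃ e' ∈ T2.E, (e'.1 = p.2 ∨ e'.2 = p.2) ∧ ¬ EdgeMatched2 T1 T2 M e')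

/-- `M_SM`: the semi-matched pairs of `M`. -/
def MSM (T1 T2 : Template) (M : Finset (Fin T1.v × Fin T2.v)) :
    Finset (Fin T1.v × Fin T2.v) :=
  M.filter (IsSemiMatched T1 T2 M)

/-- `M_PM`: the perfectly matched pairs of `M`. -/
def MPM (T1 T2 : Template) (M : Finset (Fin T1.v × Fin T2.v)) :
    Finset (Fin T1.v × Fin T2.v) :=
  M.filter fun p => ¬ IsSemiMatched T1 T2 M p

/-- A node is isolated if it is incident to no edge. -/
def IsIsolated (T : Template) (w : Fin T.v) : Prop :=
  ∀ e ∈ T.E, e.1 ≠ w ∧ e.2 ≠ w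

/-- The pruned matching `M⁻`: remove the pair of first (resp. second) distinguished nodes
whenever that node is isolated in `T1` or in `T2`. -/
def Mminus (T1 T2 : Template) (M : Finset (Fin T1.v × Fin T2.v)) :
    Finset (Fin T1.v × Fin T2.v) :=
  M.filter fun p =>
    ¬ ((p = (T1.v1, T2.v1) ∧ (IsIsolated T1 T1.v1 ∨ IsIsolated T2 T2.v1)) ∨
       (p = (T1.v2, T2.v2) ∧ (IsIsolated T1 T1.v2 ∨ IsIsolated T2 T2.v2)))

/-- `M ∈ M*`: every connected component of `T1` and of `T2` meets the pruned matching. -/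
def InMstar (T1 T2 : Template) (M : Finset (Fin T1.v × Fin T2.v)) : Prop :=
  (∀ w : Fin T1.v, ∃ p ∈ Mminus T1 T2 M, T1.graph.Reachable w p.1) ∧
  (∀ w : Fin T2.v, ∃ p ∈ Mminus T1 T2 M, T2.graph.Reachable w p.2)

open scoped BigOperators

lemma sqrt_pow_eq_rpow_div_two {x : ℝ} (hx : 0 ≤ x) (m : ℕ) : √(x ^ m) = x ^ ((m : ℝ) / 2) := by
  rw [Real.sqrt_eq_rpow, ← Real.rpow_natCast, ← Real.rpow_mul hx, mul_one_div]

/-! ### Uniform labels and independent bits -/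

section UniformLabels

variable {ι κ α : Type*} [Fintype ι] [DecidableEq ι] [Fintype κ] [DecidableEq κ] [Fintype α]

lemma expect_comp_injective [Nonempty α] {M : Type*} [AddCommMonoid M] [Module ℚ≥0 M]
    {f : κ → ι} (hf : Function.Injective f) (F : (κ → α) → M) :
    𝔼 z : ι → α, F (z ∘ f) = 𝔼 w : κ → α, F w := by
  let split : κ ⊕ ↥(Set.range f)ᶜ ≃ ι :=
    ((Equiv.ofInjective f hf).sumCongr (Equiv.refl _)).trans (Equiv.Set.sumCompl _)
  let e : (ι → α) ≃ (κ → α) × (↥(Set.range f)ᶜ → α) :=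
    (split.symm.arrowCongr (Equiv.refl α)).trans (Equiv.sumArrowEquivProdArrow _ _ α)
  have fst_e (z : ι → α) : (e z).1 = z ∘ f := rfl
  calc
    𝔼 z : ι → α, F (z ∘ f) = 𝔼 x : (κ → α) × (↥(Set.range f)ᶜ → α), F x.1 :=
      Fintype.expect_equiv e _ _ fun z => by rw [fst_e]
    _ = 𝔼 w : κ → α, 𝔼 _u : ↥(Set.range f)ᶜ → α, F w := by
      rw [← Finset.univ_product_univ, Finset.expect_product]
    _ = 𝔼 w : κ → α, F w := by simp only [Fintype.expect_const]

lemma card_filter_forall_eq [Nonempty κ] [DecidablePred fun w : κ → α => ∀ a b, w a = w b] :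
    #{w : κ → α | ∀ a b, w a = w b} = Fintype.card α := by
  have constant_functions : ({w : κ → α | ∀ a b, w a = w b} : Finset (κ → α)) =
      univ.map ⟨Function.const κ, Function.const_injective⟩ := by
    ext w
    simp only [mem_filter, mem_univ, true_and, mem_map, Function.Embedding.coeFn_mk]
    constructor
    · intro h
      exact ⟨w (Classical.arbitrary κ), funext fun a => h _ a⟩
    · rintro ⟨c, rfl⟩ _ _
      rfl
  rw [constant_functions, card_map, card_univ]

lemma expect_ite_forall_eq {𝕜 : Type*} [Field 𝕜] [CharZero 𝕜] [Nonempty κ] [Nonempty α]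
    [DecidablePred fun w : κ → α => ∀ a b, w a = w b] :
    𝔼 w : κ → α, (if ∀ a b, w a = w b then 1 else 0 : 𝕜) =
      ((Fintype.card α : 𝕜) ^ (Fintype.card κ - 1))⁻¹ := by
  have hα : (Fintype.card α : 𝕜) ≠ 0 := Nat.cast_ne_zero.mpr Fintype.card_ne_zero
  rw [Fintype.expect_eq_sum_div_card, sum_boole, card_filter_forall_eq, Fintype.card_fun,
    Nat.cast_pow, ← mul_pow_sub_one Fintype.card_ne_zero, div_mul_cancel_left₀ hα]

end UniformLabels

lemma sum_bernoulli_mul_prod {ι R : Type*} [Fintype ι] [DecidableEq ι] [CommRing R] (r : ι → R)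
    (S : Finset ι) (f : Bool → R) :
    ∑ y : ι → Bool, (∏ i, if y i then r i else 1 - r i) * ∏ i ∈ S, f (y i) =
      ∏ i ∈ S, (r i * f true + (1 - r i) * f false) := by
  calc
    _ = ∑ y : ι → Bool, ∏ i, (if y i then r i else 1 - r i) * if i ∈ S then f (y i) else 1 := by
      simp only [prod_mul_distrib, prod_ite_mem, univ_inter]
    _ = ∏ i, ∑ b : Bool, (if b then r i else 1 - r i) * if i ∈ S then f b else 1 := by
      rw [Fintype.prod_sum]
    _ = ∏ i, if i ∈ S then r i * f true + (1 - r i) * f false else 1 := by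
      refine prod_congr rfl fun i _ => ?_
      split_ifs <;> simp
    _ = _ := by rw [prod_ite_mem, univ_inter]

/-! ### Moments of the monomial of an edge set -/

/-- The monomial `∏_{(i,j) ∈ S} Y_{ij}` of a set `S` of edges on the nodes `1, …, n`, i.e. of a
graph that is already placed inside the observed one. -/
def edgeMonomial {n : ℕ} (q : ℝ) (S : Finset (Pairs n)) (y : EdgeConf n) : ℝ :=
  ∏ p ∈ S, ((if y p then 1 else 0) - q)

/-- The probability that the labels agree along every edge of `S`, for i.i.d. uniform labels,
as an average over all labelings. -/
def agreeProb {n : ℕ} (K : ℕ) (S : Finset (Pairs n)) : ℝ :=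
  𝔼 z : Lab n K, if ∀ p ∈ S, z p.1.1 = z p.1.2 then 1 else 0

section Moments

variable {n K : ℕ} {q lam : ℝ}

lemma expec_prod_eq_expect (f : Bool → ℝ) (S : Finset (Pairs n)) :
    expec n K q lam (fun _ y => ∏ p ∈ S, f (y p)) =
      𝔼 z : Lab n K, ∏ p ∈ S,
        (pEdge n K q lam z p * f true + (1 - pEdge n K q lam z p) * f false) := by
  simp only [expec, wt, mul_assoc, ← mul_sum, sum_bernoulli_mul_prod]
  rw [Fintype.expect_eq_sum_div_card, Fintype.card_fun, Fintype.card_fin, Fintype.card_fin,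
    Nat.cast_pow, inv_pow, inv_mul_eq_div]

lemma expec_edgeMonomial (S : Finset (Pairs n)) :
    expec n K q lam (fun _ y => edgeMonomial q S y) =
      𝔼 z : Lab n K, ∏ p ∈ S, (pEdge n K q lam z p - q) := by
  simp only [edgeMonomial]
  rw [expec_prod_eq_expect fun b => (if b then 1 else 0) - q]
  refine expect_congr rfl fun z _ => prod_congr rfl fun p _ => ?_
  simp only [if_true, Bool.false_eq_true, if_false]
  ring

lemma expec_edgeMonomial_sq (S : Finset (Pairs n)) :
    expec n K q lam (fun _ y => edgeMonomial q S y ^ 2) =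
      𝔼 z : Lab n K, ∏ p ∈ S, (q * (1 - q) + (pEdge n K q lam z p - q) * (1 - 2 * q)) := by
  simp only [edgeMonomial, ← prod_pow]
  rw [expec_prod_eq_expect fun b => ((if b then 1 else 0) - q) ^ 2]
  refine expect_congr rfl fun z _ => prod_congr rfl fun p _ => ?_
  simp only [if_true, Bool.false_eq_true, if_false]
  ring

lemma pEdge_sub (z : Lab n K) (p : Pairs n) :
    pEdge n K q lam z p - q = if z p.1.1 = z p.1.2 then lam else 0 := by
  unfold pEdge
  split_ifs <;> ring

lemma pEdge_sub_nonneg (hlam : 0 ≤ lam) (z : Lab n K) (p : Pairs n) :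
    0 ≤ pEdge n K q lam z p - q := by
  rw [pEdge_sub]
  split_ifs <;> simp [hlam]

lemma pEdge_sub_le (hlam : 0 ≤ lam) (z : Lab n K) (p : Pairs n) :
    pEdge n K q lam z p - q ≤ lam := by
  rw [pEdge_sub]
  split_ifs <;> simp [hlam]

lemma expec_edgeMonomial_eq_agreeProb (S : Finset (Pairs n)) :
    expec n K q lam (fun _ y => edgeMonomial q S y) = agreeProb K S * lam ^ #S := by
  simp only [expec_edgeMonomial, pEdge_sub, prod_ite_zero, prod_const, agreeProb, expect_mul,
    ite_mul, one_mul, zero_mul]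

lemma agreeProb_nonneg (S : Finset (Pairs n)) : 0 ≤ agreeProb K S :=
  expect_nonneg fun z _ => by split_ifs <;> simp

lemma pow_card_le_expec_edgeMonomial_sq [NeZero K] (hq0 : 0 ≤ q) (hq2 : q ≤ 1 / 2)
    (hlam : 0 ≤ lam) (S : Finset (Pairs n)) :
    (q * (1 - q)) ^ #S ≤ expec n K q lam (fun _ y => edgeMonomial q S y ^ 2) := by
  have hqbar : 0 ≤ q * (1 - q) := mul_nonneg hq0 (by linarith)
  calc
    (q * (1 - q)) ^ #S = 𝔼 _z : Lab n K, ∏ _p ∈ S, q * (1 - q) := by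
      rw [Fintype.expect_const, prod_const]
    _ ≤ _ := by
      rw [expec_edgeMonomial_sq]
      refine expect_le_expect fun z _ => prod_le_prod (fun p _ => hqbar) fun p _ => ?_
      exact le_add_of_nonneg_right (mul_nonneg (pEdge_sub_nonneg hlam z p) (by linarith))

lemma expec_edgeMonomial_le_expec_sq (hq0 : 0 ≤ q) (hlam : 0 ≤ lam) (hql : q + 2 * lam ≤ 1)
    (S : Finset (Pairs n)) :
    expec n K q lam (fun _ y => edgeMonomial q S y) ≤
      expec n K q lam (fun _ y => edgeMonomial q S y ^ 2) := by
  rw [expec_edgeMonomial, expec_edgeMonomial_sq]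
  refine expect_le_expect fun z _ =>
    prod_le_prod (fun p _ => pEdge_sub_nonneg hlam z p) fun p _ => ?_
  have excess_le : q * (2 * (pEdge n K q lam z p - q)) ≤ q * (1 - q) := by
    gcongr
    linarith [pEdge_sub_le (q := q) hlam z p]
  linarith

theorem abs_expec_edgeMonomial_div_sqrt_le [NeZero K] (hq0 : 0 < q) (hq2 : q ≤ 1 / 2)
    (hlam : 0 ≤ lam) (hql : q + 2 * lam ≤ 1) (S : Finset (Pairs n)) :
    |expec n K q lam (fun _ y => edgeMonomial q S y) /
        √(expec n K q lam (fun _ y => edgeMonomial q S y ^ 2))| ≤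
      min (agreeProb K S * (lam / √(q * (1 - q))) ^ #S) √(agreeProb K S * lam ^ #S) := by
  have hqbar : 0 < q * (1 - q) := mul_pos hq0 (by linarith)
  have qbar_le := pow_card_le_expec_edgeMonomial_sq (K := K) hq0.le hq2 hlam S
  have mean_le := expec_edgeMonomial_le_expec_sq (K := K) hq0.le hlam hql S
  rw [expec_edgeMonomial_eq_agreeProb] at mean_le ⊢
  set m := agreeProb K S * lam ^ #S
  set s := expec n K q lam fun _ y => edgeMonomial q S y ^ 2
  have hm : 0 ≤ m := mul_nonneg (agreeProb_nonneg S) (pow_nonneg hlam _)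
  rw [abs_of_nonneg (div_nonneg hm (Real.sqrt_nonneg s))]
  refine le_min ?_ ?_
  · have sqrt_qbar_le : √(q * (1 - q)) ^ #S ≤ √s := by
      apply Real.le_sqrt_of_sq_le
      rwa [pow_right_comm, Real.sq_sqrt hqbar.le]
    calc
      m / √s ≤ m / √(q * (1 - q)) ^ #S := by gcongr
      _ = agreeProb K S * (lam / √(q * (1 - q))) ^ #S := by rw [div_pow, mul_div_assoc]
  · apply div_le_of_le_mul₀ (Real.sqrt_nonneg s) (Real.sqrt_nonneg m)
    calc
      m = √m * √m := (Real.mul_self_sqrt hm).symm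
      _ ≤ √m * √s := by gcongr

end Moments

/-! ### Placing a connected template -/

/-- The edge slot `{i, j}`, with its endpoints put in increasing order. -/
def slot {n : ℕ} {i j : Fin n} (h : i ≠ j) : Pairs n :=
  ⟨(min i j, max i j), min_lt_max.mpr h⟩

section Slot

variable {n : ℕ} {i j : Fin n}

lemma sym2Mk_slot (h : i ≠ j) : s((slot h).1.1, (slot h).1.2) = s(i, j) := by
  rcases le_total i j with hij | hij <;> simp [slot, hij, Sym2.eq_swap]

lemma apply_slot_eq_iff {α : Type*} (z : Fin n → α) (h : i ≠ j) :
    z (slot h).1.1 = z (slot h).1.2 ↔ z i = z j := by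
  rcases le_total i j with hij | hij <;> simp [slot, hij, eq_comm]

lemma Ymat_eq_slot (q : ℝ) (y : EdgeConf n) (h : i ≠ j) :
    Ymat n q y i j = (if y (slot h) then 1 else 0) - q :=
  dif_neg h

end Slot

lemma eq_of_adj_imp_eq {V α : Type*} {G : SimpleGraph V} (hG : G.Preconnected) {c : V → α}
    (hc : ∀ a b, G.Adj a b → c a = c b) (a b : V) : c a = c b := by
  have := ((G.reachable_iff_reflTransGen a b).mp (hG a b)).lift c hc
  rwa [Relation.reflTransGen_eq_self] at this

namespace Template

variable {n : ℕ} {T : Template} (π : Fin T.v ↪ Fin n)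

lemma apply_ne_of_mem {e : Fin T.v × Fin T.v} (he : e ∈ T.E) : π e.1 ≠ π e.2 :=
  π.injective.ne (T.hE e he).ne

lemma slot_injective :
    Function.Injective fun e : {e // e ∈ T.E} => slot (apply_ne_of_mem π e.2) := by
  rintro ⟨e, he⟩ ⟨e', he'⟩ h
  have same_endpoints : s(π e.1, π e.2) = s(π e'.1, π e'.2) := by
    rw [← sym2Mk_slot (apply_ne_of_mem π he), ← sym2Mk_slot (apply_ne_of_mem π he')]
    exact congrArg (fun p : Pairs n => s(p.1.1, p.1.2)) h
  simp only [Sym2.eq_iff, π.injective.eq_iff] at same_endpoints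
  rcases same_endpoints with ⟨h1, h2⟩ | ⟨h1, h2⟩
  · exact Subtype.ext (Prod.ext h1 h2)
  · have reversed : e'.2 < e'.1 := h1 ▸ h2 ▸ T.hE e he
    exact absurd (T.hE e' he') reversed.not_gt

variable (T) in
/-- The image `π(E)` of the edge set of a template under a labeling `π`, as a set of edge slots. -/
def placedEdges : Finset (Pairs n) :=
  T.E.attach.map ⟨fun e => slot (apply_ne_of_mem π e.2), slot_injective π⟩

variable (T) in
lemma card_placedEdges : #(T.placedEdges π) = #T.E := by
  rw [placedEdges, card_map, card_attach]

variable (T) in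
lemma PG_eq_edgeMonomial (q : ℝ) : PG n q T π = edgeMonomial q (T.placedEdges π) := by
  ext y
  rw [PG, ← prod_attach, edgeMonomial, placedEdges, prod_map]
  exact prod_congr rfl fun e _ => Ymat_eq_slot q y (apply_ne_of_mem π e.2)

lemma forall_placedEdges_iff (hconn : T.graph.Preconnected) {α : Type*} (z : Fin n → α) :
    (∀ p ∈ T.placedEdges π, z p.1.1 = z p.1.2) ↔ ∀ a b, (z ∘ π) a = (z ∘ π) b := by
  simp only [placedEdges, forall_mem_map, Function.Embedding.coeFn_mk, apply_slot_eq_iff,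
    mem_attach, true_imp_iff, Subtype.forall]
  refine ⟨fun h => eq_of_adj_imp_eq hconn fun a b hab => ?_, fun h e _ => h e.1 e.2⟩
  rcases ((SimpleGraph.fromRel_adj _ a b).mp hab).2 with hE | hE
  · exact h _ hE
  · exact (h _ hE).symm

lemma agreeProb_placedEdges {K : ℕ} [NeZero K] (hconn : T.graph.Preconnected) :
    agreeProb K (T.placedEdges π) = ((K : ℝ) ^ (T.v - 1))⁻¹ := by
  have : Nonempty (Fin T.v) := ⟨T.v1⟩
  calc
    agreeProb K (T.placedEdges π) =
        𝔼 z : Lab n K, if ∀ a b, (z ∘ π) a = (z ∘ π) b then (1 : ℝ) else 0 :=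
      expect_congr rfl fun z _ => if_congr (forall_placedEdges_iff π hconn z) rfl rfl
    _ = 𝔼 w : Fin T.v → Fin K, if ∀ a b, w a = w b then (1 : ℝ) else 0 :=
      expect_comp_injective π.injective
        (fun w : Fin T.v → Fin K => if ∀ a b, w a = w b then (1 : ℝ) else 0)
    _ = ((K : ℝ) ^ (T.v - 1))⁻¹ := by
      rw [expect_ite_forall_eq, Fintype.card_fin, Fintype.card_fin]

end Template

theorem statement8_general (n K : ℕ) (q lam : ℝ) (hK : 0 < K) (hq2 : q ≤ 1 / 2)
    (hql : q + 2 * lam ≤ 1) (hlam : 0 ≤ lam) (hq0 : 0 < q)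
    (T : Template) (hconn : T.graph.Connected) (π : Fin T.v ↪ Fin n) :
    |expec n K q lam (fun _ y => PG n q T π y) /
        Real.sqrt (expec n K q lam (fun _ y => PG n q T π y ^ 2))| ≤
      min ((K : ℝ) ^ (-((T.v - 1 : ℕ) : ℝ)) * (lam / Real.sqrt (q * (1 - q))) ^ T.E.card)
        (lam ^ ((T.E.card : ℝ) / 2) / (K : ℝ) ^ (((T.v - 1 : ℕ) : ℝ) / 2)) := by
  have : NeZero K := ⟨hK.ne'⟩
  have bound := abs_expec_edgeMonomial_div_sqrt_le (K := K) hq0 hq2 hlam hql (T.placedEdges π)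
  rw [← T.PG_eq_edgeMonomial π q, T.card_placedEdges π,
    Template.agreeProb_placedEdges π hconn.preconnected] at bound
  convert bound using 2
  · rw [Real.rpow_neg K.cast_nonneg, Real.rpow_natCast]
  · rw [inv_mul_eq_div, Real.sqrt_div (pow_nonneg hlam _), sqrt_pow_eq_rpow_div_two hlam,
      sqrt_pow_eq_rpow_div_two K.cast_nonneg]

theorem statement8 (n K : ℕ) (q lam : ℝ) (hn : 2 ≤ n) (hK : 2 ≤ K) (hKn : K ≤ n)
    (hq2 : q ≤ 1 / 2) (hql : q + 2 * lam ≤ 1) (hlam : 0 < lam) (hq0 : 0 < q)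
    (T : Template) (hconn : T.graph.Connected)
    (π : Fin T.v ↪ Fin n) (hπ : π ∈ PiV n hn T) :
    |expec n K q lam (fun _ y => PG n q T π y) /
        Real.sqrt (expec n K q lam (fun _ y => PG n q T π y ^ 2))| ≤
      min ((K : ℝ) ^ (-((T.v - 1 : ℕ) : ℝ)) * (lam / Real.sqrt (q * (1 - q))) ^ T.E.card)
        (lam ^ ((T.E.card : ℝ) / 2) / (K : ℝ) ^ (((T.v - 1 : ℕ) : ℝ) / 2)) :=
  statement8_general n K q lam (by omega) hq2 hql hlam.le hq0 T hconn π

end SBM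
end
end

section
/- Let n ≥ 2, 2 ≤ K ≤ n, λ > 0, 0 < q < 1, q̄ := q(1−q), D ≥ 1, c_s > 0. Assume 2·D^{16c_s}·λ ≤ (λ/K + q̄)^{1 − log_n(K)} and log_n(K) ≥ 1/2, where log_n(K) := log K / log n. Then for every real r ≥ 1: min( (√n/K)·(λ/√q̄)^r , λ^{r/2}·√(n/K) ) ≤ D^{−8c_s·r}. -/
/-!
Write `K = n ^ (1 - b)`, so that `0 ≤ b ≤ 1/2`, and put `M = D ^ (16 cs)` and `v = q (1 - q)`.
The hypothesis `2 M λ ≤ (λ / K + v) ^ b` bounds `M λ` in terms of `λ` itself; solving it for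
`M λ` gives `M λ ≤ max (1 / n) v ^ b`.

The scale that decides between the two terms is `v ^ r = 1 / n`. If `v ^ r ≤ 1 / n`, then
`(M λ) ^ r ≤ n ^ (-b) = K / n`, which is the bound on the second term. If `v ^ r ≥ 1 / n`, then
`M λ ≤ v ^ b`, and the first term times `M ^ (r / 2)` is at most `(n v ^ r) ^ (b - 1/2)`, a
nonpositive power of a number that is at least one.
-/

section SignalCondition

open Real

variable {n K M v lam b r : ℝ}

lemma rpow_right_comm {x : ℝ} (hx : 0 ≤ x) (y z : ℝ) : (x ^ y) ^ z = (x ^ z) ^ y := by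
  rw [← rpow_mul hx, mul_comm, rpow_mul hx]

lemma le_max_rpow_of_two_mul_le_add_rpow {x y z : ℝ} (hx : 0 ≤ x) (hy : 0 ≤ y) (hb0 : 0 ≤ b)
    (hb1 : b ≤ 1) (h : 2 * z ≤ (x + y) ^ b) : z ≤ max x y ^ b := by
  have hmax : 0 ≤ max x y := le_max_of_le_left hx
  have htwo : (2 : ℝ) ^ b ≤ 2 := rpow_le_self_of_one_le one_le_two hb1
  have : 2 * z ≤ 2 * max x y ^ b := calc
    2 * z ≤ (x + y) ^ b := h
    _ ≤ (2 * max x y) ^ b := by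
      gcongr
      linarith [le_max_left x y, le_max_right x y]
    _ = 2 ^ b * max x y ^ b := mul_rpow zero_le_two hmax
    _ ≤ 2 * max x y ^ b := by gcongr
  linarith

lemma le_inv_rpow_of_le_div_rpow {x : ℝ} (hx : 0 < x) (hn : 0 < n) (hb : b < 1)
    (h : x ≤ (x / n ^ (1 - b)) ^ b) : x ≤ n⁻¹ ^ b := by
  have hpow : x ^ (1 - b) ≤ (n⁻¹ ^ b) ^ (1 - b) := calc
    x ^ (1 - b) = x / x ^ b := by rw [rpow_sub hx, rpow_one]
    _ ≤ (x / n ^ (1 - b)) ^ b / x ^ b := by gcongr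
    _ = (n⁻¹ ^ b) ^ (1 - b) := by
      rw [div_rpow hx.le (by positivity), div_right_comm, div_self (by positivity), one_div,
        rpow_right_comm hn.le, ← inv_rpow (by positivity), ← inv_rpow hn.le]
  exact (rpow_le_rpow_iff hx.le (by positivity) (sub_pos.2 hb)).1 hpow

lemma mul_le_max_inv_rpow (hn : 0 < n) (hM : 1 ≤ M) (hv : 0 ≤ v) (hlam : 0 < lam) (hb0 : 0 ≤ b)
    (hb1 : b < 1) (h : 2 * M * lam ≤ (lam / n ^ (1 - b) + v) ^ b) :
    M * lam ≤ max n⁻¹ v ^ b := by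
  have hmax : M * lam ≤ max (lam / n ^ (1 - b)) v ^ b :=
    le_max_rpow_of_two_mul_le_add_rpow (by positivity) hv hb0 hb1.le (by rwa [← mul_assoc])
  rcases max_choice (lam / n ^ (1 - b)) v with heq | heq <;> rw [heq] at hmax
  · have hself : M * lam ≤ (M * lam / n ^ (1 - b)) ^ b := by
      refine hmax.trans ?_
      gcongr
      exact le_mul_of_one_le_left hlam.le hM
    calc
      M * lam ≤ n⁻¹ ^ b := le_inv_rpow_of_le_div_rpow (by positivity) hn hb1 hself
      _ ≤ max n⁻¹ v ^ b := by gcongr; exact le_max_left _ _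
  · exact hmax.trans (by gcongr; exact le_max_right _ _)

lemma rpow_mul_sqrt_div_le (hn : 0 < n) (hK : 0 < K) (hM : 0 < M) (hlam : 0 ≤ lam)
    (h : (M * lam) ^ r ≤ K / n) : lam ^ (r / 2) * √(n / K) ≤ M ^ (-(r / 2)) := by
  have hroot : (M * lam) ^ (r / 2) ≤ √(K / n) := calc
    (M * lam) ^ (r / 2) = √((M * lam) ^ r) := by
      rw [sqrt_eq_rpow, ← rpow_mul (by positivity), mul_one_div]
    _ ≤ √(K / n) := sqrt_le_sqrt h
  rw [rpow_neg hM.le, ← one_div, le_div_iff₀ (by positivity)]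
  calc
    lam ^ (r / 2) * √(n / K) * M ^ (r / 2) = (M * lam) ^ (r / 2) * √(n / K) := by
      rw [mul_rpow hM.le hlam]; ring
    _ ≤ √(K / n) * √(n / K) := by gcongr
    _ = 1 := by rw [← inv_div n K, sqrt_inv, inv_mul_cancel₀ (by positivity)]

lemma rpow_mul_div_sqrt_rpow_le (hn : 0 < n) (hM : 1 ≤ M) (hv : 0 < v) (hlam : 0 ≤ lam)
    (hb : b ≤ 1 / 2) (hr : 0 ≤ r) (hMlam : M * lam ≤ v ^ b) (hnv : n⁻¹ ≤ v ^ r) :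
    n ^ (b - 1 / 2) * (lam / √v) ^ r ≤ M ^ (-(r / 2)) := by
  have hM0 : 0 < M := one_pos.trans_le hM
  have hbase : √M * (lam / √v) ≤ v ^ (b - 1 / 2) := calc
    √M * (lam / √v) ≤ M * (lam / √v) := by gcongr; exact sqrt_le_self_iff.2 (.inr hM)
    _ = M * lam / √v := (mul_div_assoc _ _ _).symm
    _ ≤ v ^ b / √v := by gcongr
    _ = v ^ (b - 1 / 2) := by rw [sqrt_eq_rpow, rpow_sub hv]
  rw [rpow_neg hM0.le, ← one_div, le_div_iff₀ (by positivity)]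
  calc
    n ^ (b - 1 / 2) * (lam / √v) ^ r * M ^ (r / 2)
      = n ^ (b - 1 / 2) * (√M * (lam / √v)) ^ r := by
        rw [mul_rpow (by positivity) (by positivity), rpow_div_two_eq_sqrt r hM0.le]; ring
    _ ≤ n ^ (b - 1 / 2) * (v ^ (b - 1 / 2)) ^ r := by gcongr
    _ = (n * v ^ r) ^ (b - 1 / 2) := by rw [rpow_right_comm hv.le, mul_rpow hn.le (by positivity)]
    _ ≤ 1 := rpow_le_one_of_one_le_of_nonpos ((inv_le_iff_one_le_mul₀' hn).1 hnv) (by linarith)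

lemma min_le_rpow_of_mul_le_max_inv_rpow (hn : 1 ≤ n) (hM : 1 ≤ M) (hv : 0 < v) (hlam : 0 ≤ lam)
    (hb0 : 0 ≤ b) (hb : b ≤ 1 / 2) (hr : 1 ≤ r) (h : M * lam ≤ max n⁻¹ v ^ b) :
    min (√n / n ^ (1 - b) * (lam / √v) ^ r) (lam ^ (r / 2) * √(n / n ^ (1 - b))) ≤
      M ^ (-(r / 2)) := by
  have hn0 : 0 < n := one_pos.trans_le hn
  have hM0 : 0 < M := one_pos.trans_le hM
  have hr0 : 0 < r := one_pos.trans_le hr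
  have hinv : n⁻¹ ^ r ≤ n⁻¹ := rpow_le_self_of_le_one (by positivity) (inv_le_one_of_one_le₀ hn) hr
  rcases le_total (v ^ r) n⁻¹ with hvn | hnv
  · have hmax : max n⁻¹ v ^ r ≤ n⁻¹ := by
      rcases max_choice n⁻¹ v with heq | heq <;> rwa [heq]
    refine min_le_of_right_le (rpow_mul_sqrt_div_le hn0 (by positivity) hM0 hlam ?_)
    calc
      (M * lam) ^ r ≤ (max n⁻¹ v ^ b) ^ r := by gcongr
      _ = (max n⁻¹ v ^ r) ^ b := rpow_right_comm (by positivity) _ _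
      _ ≤ n⁻¹ ^ b := by gcongr
      _ = n ^ (1 - b) / n := by rw [inv_rpow hn0.le, rpow_sub hn0, rpow_one]; field_simp
  · have hle : n⁻¹ ≤ v :=
      (rpow_le_rpow_iff (by positivity) hv.le hr0).1 (hinv.trans hnv)
    have hcoeff : √n / n ^ (1 - b) = n ^ (b - 1 / 2) := by
      rw [sqrt_eq_rpow, ← rpow_sub hn0]; ring_nf
    rw [max_eq_right hle] at h
    exact min_le_of_left_le (hcoeff ▸ rpow_mul_div_sqrt_rpow_le hn0 hM hv hlam hb hr0.le h hnv)

theorem statement14_general (hn : 1 < n) (hK : 0 < K) (hKn : K ≤ n) (hM : 1 ≤ M) (hv : 0 < v)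
    (hlam : 0 < lam) (hcond : 2 * M * lam ≤ (lam / K + v) ^ (1 - log K / log n))
    (hhalf : 1 / 2 ≤ log K / log n) (hr : 1 ≤ r) :
    min (√n / K * (lam / √v) ^ r) (lam ^ (r / 2) * √(n / K)) ≤ M ^ (-(r / 2)) := by
  have hn0 : 0 < n := one_pos.trans hn
  set b := 1 - log K / log n with hb
  have hb0 : 0 ≤ b := by
    rw [hb, sub_nonneg, div_le_one (log_pos hn)]
    exact log_le_log hK hKn
  have hKb : K = n ^ (1 - b) := by
    rw [hb, sub_sub_cancel, log_div_log, rpow_logb hn0 hn.ne' hK]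
  rw [hKb] at hcond ⊢
  exact min_le_rpow_of_mul_le_max_inv_rpow hn.le hM hv hlam.le hb0 (by linarith) hr
    (mul_le_max_inv_rpow hn0 hM hv.le hlam hb0 (by linarith) hcond)

end SignalCondition

/-- Lemma on the signal condition: below the conjectured threshold, each term of the
low-degree signal condition is small. -/
theorem statement14 (n K D : ℕ) (q lam cs : ℝ)
    (hn : 2 ≤ n) (hK : 2 ≤ K) (hKn : K ≤ n)
    (hlam : 0 < lam) (hq0 : 0 < q) (hq1 : q < 1) (hD : 1 ≤ D) (hcs : 0 < cs)
    (hcond : 2 * (D : ℝ) ^ (16 * cs) * lam ≤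
      (lam / K + q * (1 - q)) ^ (1 - Real.log K / Real.log n))
    (hhalf : 1 / 2 ≤ Real.log K / Real.log n) :
    ∀ r : ℝ, 1 ≤ r →
      min (Real.sqrt n / K * (lam / Real.sqrt (q * (1 - q))) ^ r)
          (lam ^ (r / 2) * Real.sqrt ((n : ℝ) / K)) ≤
        (D : ℝ) ^ (-(8 * cs * r)) := by
  intro r hr
  rw [show -(8 * cs * r) = 16 * cs * -(r / 2) by ring, Real.rpow_mul D.cast_nonneg]
  exact statement14_general (by exact_mod_cast hn) (by positivity) (by exact_mod_cast hKn)
    (Real.one_le_rpow (by exact_mod_cast hD) (by positivity)) (mul_pos hq0 (sub_pos.2 hq1)) hlam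
    hcond hhalf hr
end

section
/- In the SBM, for any template G = (V,E) and any labeling π ∈ Π_V: E[P_{G,π}] = λ^{|E|} · K^{−(|V| − #CC(G))}, where #CC(G) is the number of connected components of G (isolated nodes counting as components). -/
/-!
Conditionally on the labels `z`, the edges are independent and `Y_{ij}` has mean `λ 1{z_i = z_j}`.
An injective `π` sends distinct edges of the template to distinct pairs of nodes, so
`E[P_{G,π} | z] = ∏_{(u,w) ∈ E} λ 1{z_{π u} = z_{π w}}`, which is `λ^|E|` when `z ∘ π` is constant
on the connected components of `G` and `0` otherwise. Since `z ∘ π` is a uniform labelling of `V`,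
the former has probability `K^#CC(G) / K^|V|`.
-/

open Classical Finset

noncomputable section

namespace SBM

open scoped BigOperators

section ComponentLabels

variable {V α : Type*} (G : SimpleGraph V)

/-- A labelling that agrees along every edge of `G`, that is, one which is constant on the connected
components of `G`. -/
def IsEdgeConstant (x : V → α) : Prop := ∀ a b, G.Adj a b → x a = x b

lemma reachableSetoid_le_ker_iff (x : V → α) :
    G.reachableSetoid ≤ Setoid.ker x ↔ IsEdgeConstant G x := by
  refine ⟨fun h a b hab => h hab.reachable, fun h a b hab => ?_⟩
  obtain ⟨walk⟩ : G.Reachable a b := hab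
  induction walk with
  | nil => rfl
  | cons hadj _ ih => exact (h _ _ hadj).trans ih

lemma card_isEdgeConstant [Finite V] :
    Nat.card {x : V → α // IsEdgeConstant G x} = Nat.card α ^ Nat.card G.ConnectedComponent := by
  rw [← Nat.card_fun]
  exact Nat.card_congr <|
    (Equiv.subtypeEquivRight fun x => (reachableSetoid_le_ker_iff G x).symm).trans
      (Setoid.liftEquiv G.reachableSetoid)

lemma card_connectedComponent_le [Finite V] : Nat.card G.ConnectedComponent ≤ Nat.card V :=
  Nat.card_le_card_of_surjective G.connectedComponentMk Quot.mk_surjective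

lemma expect_ite_isEdgeConstant {R : Type*} [Field R] [CharZero R] [Fintype V] [DecidableEq V]
    [Fintype α] [Nonempty α] (c : R) :
    𝔼 x : V → α, (if IsEdgeConstant G x then c else 0) =
      c * (Fintype.card α : R)⁻¹ ^ (Fintype.card V - Nat.card G.ConnectedComponent) := by
  have hα : (Fintype.card α : R) ≠ 0 := Nat.cast_ne_zero.mpr Fintype.card_ne_zero
  have hle : Nat.card G.ConnectedComponent ≤ Fintype.card V := by
    simpa only [Nat.card_eq_fintype_card] using card_connectedComponent_le G
  have hcount := card_isEdgeConstant (α := α) G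
  rw [Nat.card_eq_fintype_card, Fintype.card_subtype, Nat.card_eq_fintype_card] at hcount
  rw [Fintype.expect_eq_sum_div_card, ← Finset.sum_filter, Finset.sum_const, hcount,
    Fintype.card_fun, nsmul_eq_mul, inv_pow, pow_sub₀ _ hα hle]
  push_cast
  field_simp

end ComponentLabels

lemma expect_comp_embedding {ι κ α M : Type*} [Fintype ι] [DecidableEq ι] [Fintype κ]
    [DecidableEq κ] [Fintype α] [Nonempty α] [AddCommMonoid M] [Module ℚ≥0 M] (π : κ ↪ ι)
    (F : (κ → α) → M) : 𝔼 x : ι → α, F (x ∘ π) = 𝔼 x, F x := by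
  let split : ι ≃ κ ⊕ ↥(Set.range π)ᶜ :=
    (Equiv.Set.sumCompl (Set.range π)).symm.trans
      ((Equiv.ofInjective π π.injective).symm.sumCongr (Equiv.refl _))
  let restrict : (ι → α) ≃ (κ → α) × (↥(Set.range π)ᶜ → α) :=
    (split.arrowCongr (Equiv.refl α)).trans (Equiv.sumArrowEquivProdArrow _ _ _)
  calc 𝔼 x : ι → α, F (x ∘ π)
      = 𝔼 w : (κ → α) × (↥(Set.range π)ᶜ → α), F w.1 :=
        Fintype.expect_equiv restrict _ _ fun _ => rfl
    _ = 𝔼 x, 𝔼 _y : ↥(Set.range π)ᶜ → α, F x := by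
        rw [← Finset.univ_product_univ, Finset.expect_product]
    _ = 𝔼 x, F x := by simp only [Fintype.expect_const]

lemma sum_prod_mul_prod_of_sum_eq_one {ι β R : Type*} [Fintype ι] [DecidableEq ι] [Fintype β]
    [CommSemiring R] {w : ι → β → R} {S : Finset ι} (hw : ∀ i ∉ S, ∑ b, w i b = 1)
    (g : ι → β → R) :
    ∑ y : ι → β, (∏ i, w i (y i)) * ∏ i ∈ S, g i (y i) = ∏ i ∈ S, ∑ b, w i b * g i b := by
  calc ∑ y : ι → β, (∏ i, w i (y i)) * ∏ i ∈ S, g i (y i)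
      = ∑ y : ι → β, ∏ i, w i (y i) * (if i ∈ S then g i (y i) else 1) := by
        simp only [Finset.prod_mul_distrib, Fintype.prod_ite_mem]
    _ = ∏ i, ∑ b, w i b * (if i ∈ S then g i b else 1) :=
        (Fintype.prod_sum fun i b => w i b * (if i ∈ S then g i b else 1)).symm
    _ = ∏ i, if i ∈ S then ∑ b, w i b * g i b else 1 := by
        refine Finset.prod_congr rfl fun i _ => ?_
        split_ifs with hi
        · rfl
        · simpa only [mul_one] using hw i hi
    _ = ∏ i ∈ S, ∑ b, w i b * g i b := Fintype.prod_ite_mem _ _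

section ConditionalExpectation

variable {n K : ℕ} (q lam : ℝ)

/-- Expectation over the edges conditionally on the labels `z`. -/
def condExpec (z : Lab n K) (f : EdgeConf n → ℝ) : ℝ :=
  ∑ y, (∏ p, if y p then pEdge n K q lam z p else 1 - pEdge n K q lam z p) * f y

lemma expec_eq_expect_condExpec (F : Lab n K → EdgeConf n → ℝ) :
    expec n K q lam F = 𝔼 z, condExpec q lam z (F z) := by
  simp only [expec, wt, condExpec, mul_assoc, ← Finset.mul_sum, Fintype.expect_eq_sum_div_card,
    Fintype.card_fun, Fintype.card_fin, Nat.cast_pow, inv_pow, div_eq_inv_mul]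

lemma condExpec_prod_sub (z : Lab n K) (S : Finset (Pairs n)) :
    condExpec q lam z (fun y => ∏ p ∈ S, ((if y p then 1 else 0) - q)) =
      ∏ p ∈ S, if z p.1.1 = z p.1.2 then lam else 0 := by
  let bernoulli (p : Pairs n) (b : Bool) : ℝ :=
    if b then pEdge n K q lam z p else 1 - pEdge n K q lam z p
  have sum_bernoulli (p : Pairs n) : ∑ b, bernoulli p b = 1 := by simp [bernoulli]
  have mean_bernoulli (p : Pairs n) :
      ∑ b, bernoulli p b * ((if b then 1 else 0) - q) = if z p.1.1 = z p.1.2 then lam else 0 := by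
    simp only [bernoulli, pEdge, Fintype.sum_bool, if_true, Bool.false_eq_true, if_false]
    split_ifs <;> ring
  simp only [← mean_bernoulli]
  exact sum_prod_mul_prod_of_sum_eq_one (fun p _ => sum_bernoulli p)
    fun _ b => (if b then 1 else 0) - q

end ConditionalExpectation

section PairMap

variable {m n : ℕ} (π : Fin m ↪ Fin n)

/-- The action of an injection of nodes on pairs of nodes; the image is reordered because `π` need
not be monotone. -/
def pairMap : Pairs m ↪ Pairs n where
  toFun p := ⟨(min (π p.1.1) (π p.1.2), max (π p.1.1) (π p.1.2)),
    min_lt_max.mpr (π.injective.ne p.2.ne)⟩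
  inj' p p' h := by
    have hmap : Sym2.map π s(p.1.1, p.1.2) = Sym2.map π s(p'.1.1, p'.1.2) :=
      Sym2.inf_eq_inf_and_sup_eq_sup.mp (Prod.ext_iff.mp (Subtype.ext_iff.mp h))
    have hpair := Sym2.inf_eq_inf_and_sup_eq_sup.mpr (Sym2.map.injective π.injective hmap)
    simpa [Subtype.ext_iff, Prod.ext_iff, p.2.le, p'.2.le] using hpair

lemma coe_pairMap (p : Pairs m) :
    (pairMap π p).1 = (min (π p.1.1) (π p.1.2), max (π p.1.1) (π p.1.2)) :=
  rfl

lemma apply_pairMap_eq_iff {α : Type*} (z : Fin n → α) (p : Pairs m) :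
    z (pairMap π p).1.1 = z (pairMap π p).1.2 ↔ z (π p.1.1) = z (π p.1.2) := by
  rcases le_total (π p.1.1) (π p.1.2) with h | h <;> simp [coe_pairMap, h, eq_comm]

lemma Ymat_eq_pairMap (q : ℝ) (y : EdgeConf n) (p : Pairs m) :
    Ymat n q y (π p.1.1) (π p.1.2) = (if y (pairMap π p) then 1 else 0) - q :=
  dif_neg (π.injective.ne p.2.ne)

end PairMap

namespace Template

variable {n : ℕ} (T : Template)

lemma isEdgeConstant_graph_iff {α : Type*} (x : Fin T.v → α) :
    IsEdgeConstant T.graph x ↔ ∀ e ∈ T.E, x e.1 = x e.2 := by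
  refine ⟨fun h e he => h _ _ ⟨(T.hE e he).ne, .inl he⟩, ?_⟩
  rintro h a b ⟨_, hab | hba⟩
  · exact h _ hab
  · exact (h _ hba).symm

/-- The edges of a template, bundled with the ordering of their endpoints so that `pairMap` acts on
them. -/
def pairs : Finset (Pairs T.v) := T.E.subtype fun e => e.1 < e.2

lemma prod_pairs {M : Type*} [CommMonoid M] (f : Fin T.v × Fin T.v → M) :
    ∏ p ∈ T.pairs, f p = ∏ e ∈ T.E, f e :=
  Finset.prod_subtype_of_mem f T.hE

lemma PG_eq_prod_map_pairs (q : ℝ) (π : Fin T.v ↪ Fin n) (y : EdgeConf n) :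
    PG n q T π y = ∏ p ∈ T.pairs.map (pairMap π), ((if y p then 1 else 0) - q) := by
  simp only [PG, Finset.prod_map, ← Ymat_eq_pairMap]
  exact (T.prod_pairs fun e => Ymat n q y (π e.1) (π e.2)).symm

lemma condExpec_PG {K : ℕ} (q lam : ℝ) (π : Fin T.v ↪ Fin n) (z : Lab n K) :
    condExpec q lam z (PG n q T π) =
      if IsEdgeConstant T.graph (z ∘ π) then lam ^ T.E.card else 0 := by
  have hprod : condExpec q lam z (PG n q T π) =
      ∏ e ∈ T.E, if z (π e.1) = z (π e.2) then lam else 0 := by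
    rw [funext (T.PG_eq_prod_map_pairs q π), condExpec_prod_sub, Finset.prod_map]
    simp only [apply_pairMap_eq_iff]
    exact T.prod_pairs fun e => if z (π e.1) = z (π e.2) then lam else 0
  simp only [hprod, Finset.prod_ite_zero, Finset.prod_const]
  exact if_congr (T.isEdgeConstant_graph_iff (z ∘ π)).symm rfl rfl

end Template

theorem statement15_general (n K : ℕ) (q lam : ℝ) (hK : K ≠ 0) (T : Template)
    (π : Fin T.v ↪ Fin n) :
    expec n K q lam (fun _ y => PG n q T π y) =
      lam ^ T.E.card *
        ((K : ℝ)⁻¹) ^ (T.v - Nat.card T.graph.ConnectedComponent) := by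
  have : NeZero K := ⟨hK⟩
  calc expec n K q lam (fun _ y => PG n q T π y)
      = 𝔼 z : Lab n K, condExpec q lam z (PG n q T π) := expec_eq_expect_condExpec q lam _
    _ = 𝔼 z : Lab n K, if IsEdgeConstant T.graph (z ∘ π) then lam ^ T.E.card else 0 :=
        Finset.expect_congr rfl fun z _ => T.condExpec_PG q lam π z
    _ = 𝔼 x, if IsEdgeConstant T.graph x then lam ^ T.E.card else 0 :=
        expect_comp_embedding π fun x => if IsEdgeConstant T.graph x then lam ^ T.E.card else 0
    _ = lam ^ T.E.card * (K : ℝ)⁻¹ ^ (T.v - Nat.card T.graph.ConnectedComponent) := by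
        simpa only [Fintype.card_fin] using
          expect_ite_isEdgeConstant (α := Fin K) T.graph (lam ^ T.E.card)

/-- Expectation of the monomial `P_{G,π}`. -/
theorem statement15 (n K : ℕ) (q lam : ℝ) (hn : 2 ≤ n) (hK : 2 ≤ K) (hKn : K ≤ n)
    (hq0 : 0 ≤ q) (hp1 : q + lam ≤ 1) (hlam : 0 < lam)
    (T : Template) (π : Fin T.v ↪ Fin n) (hπ : π ∈ PiV n hn T) :
    expec n K q lam (fun _ y => PG n q T π y) =
      lam ^ T.E.card *
        ((K : ℝ)⁻¹) ^ (T.v - Nat.card T.graph.ConnectedComponent) := by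
  exact statement15_general n K q lam (by omega) T π

end SBM
end
end

section
/- Let z_1,…,z_N be i.i.d. uniform on {1,…,K} and let H̄ be a finite simple graph on a subset of {1,…,N}. If H is obtained from H̄ by identifying (merging) some pairs of vertices (with H also a graph on a subset of {1,…,N}), then E[ ∏_{(i,j)∈E(H)} 1{z_i=z_j} ] ≥ E[ ∏_{(i,j)∈E(H̄)} 1{z_i=z_j} ]; equivalently, K^{−|V(H)|+#CC(H)} ≥ K^{−|V(H̄)|+#CC(H̄)}. -/
open Classical

/-!
The expectation attached to a graph `G` on `V` is `K ^ (-|V| + #CC(G))`: labels outside `V` average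
out, and a labeling of `V` is constant along the edges exactly when it factors through the connected
components.

It remains to see that merging loses at most as many components as vertices. In the space of
functions `V → ℚ`, the functions constant along the edges of `H̄` form a subspace of dimension
`#CC(H̄)`, and the functions constant on each set of merged vertices form one of dimension `|V(H)|`.
Functions in both descend to functions constant along the edges of `H`, so the intersection has
dimension at most `#CC(H)`, while the sum has dimension at most `|V(H̄)|`. The dimension formula
gives `#CC(H̄) + |V(H)| ≤ #CC(H) + |V(H̄)|`.
-/

/-- The labelings `z` of the vertices of `G` that are monochromatic along every edge, i.e. those
counted by the product of the indicators `1{z_i = z_j}` over the edges of `G`. -/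
def IsEdgeConstant {V α : Type*} (G : SimpleGraph V) (z : V → α) : Prop :=
  ∀ i j, G.Adj i j → z i = z j

section Labelings

variable {V W α : Type*} {G : SimpleGraph V} {H : SimpleGraph W}

lemma IsEdgeConstant.eq_of_reachable {z : V → α} (hz : IsEdgeConstant G z) {i j : V}
    (hij : G.Reachable i j) : z i = z j := by
  obtain ⟨p⟩ := hij
  induction p with
  | nil => rfl
  | cons hadj _ ih => exact (hz _ _ hadj).trans ih

lemma isEdgeConstant_iff_exists_comp_connectedComponentMk {z : V → α} :
    IsEdgeConstant G z ↔ ∃ y : G.ConnectedComponent → α, y ∘ G.connectedComponentMk = z := by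
  constructor
  · intro hz
    exact ⟨SimpleGraph.ConnectedComponent.lift z fun _ _ p _ => hz.eq_of_reachable ⟨p⟩, rfl⟩
  · rintro ⟨y, rfl⟩ i j hij
    exact congrArg y (SimpleGraph.ConnectedComponent.connectedComponentMk_eq_of_adj hij)

lemma IsEdgeConstant.of_comp {f : V → W} {z : W → α}
    (hlift : ∀ a b, H.Adj a b → ∃ x y, f x = a ∧ f y = b ∧ G.Adj x y)
    (hz : IsEdgeConstant G (z ∘ f)) : IsEdgeConstant H z := by
  intro a b hab
  obtain ⟨x, y, rfl, rfl, hxy⟩ := hlift a b hab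
  exact hz x y hxy

lemma card_isEdgeConstant [Finite V] (G : SimpleGraph V) :
    Nat.card {z : V → α // IsEdgeConstant G z} = Nat.card α ^ Nat.card G.ConnectedComponent := by
  have hinj : Function.Injective fun y : G.ConnectedComponent → α => y ∘ G.connectedComponentMk :=
    Quot.mk_surjective.injective_comp_right
  simp only [isEdgeConstant_iff_exists_comp_connectedComponentMk]
  exact (Nat.card_range_of_injective hinj).trans Nat.card_fun

lemma prod_edgeFinset_ite_eq_ite_isEdgeConstant {M₀ : Type*} [CommMonoidWithZero M₀]
    [Fintype G.edgeSet] (z : V → α) [∀ e : Sym2 V, Decidable (∀ i ∈ e, ∀ j ∈ e, z i = z j)] :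
    (∏ e ∈ G.edgeFinset, if ∀ i ∈ e, ∀ j ∈ e, z i = z j then (1 : M₀) else 0) =
      if IsEdgeConstant G z then 1 else 0 := by
  rw [Finset.prod_boole]
  refine if_congr ?_ rfl rfl
  simp only [IsEdgeConstant, Sym2.forall, SimpleGraph.mem_edgeFinset, SimpleGraph.mem_edgeSet,
    Sym2.ball]
  grind

end Labelings

lemma card_connectedComponent_add_card_le {V W : Type*} [Finite V] {G : SimpleGraph V}
    {H : SimpleGraph W} {f : V → W} (hsurj : Function.Surjective f)
    (hlift : ∀ a b, H.Adj a b → ∃ x y, f x = a ∧ f y = b ∧ G.Adj x y) :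
    Nat.card G.ConnectedComponent + Nat.card W ≤ Nat.card H.ConnectedComponent + Nat.card V := by
  have := Fintype.ofFinite V
  have := Fintype.ofSurjective f hsurj
  let pullG := LinearMap.funLeft ℚ ℚ G.connectedComponentMk
  let pullf := LinearMap.funLeft ℚ ℚ f
  let pullH := LinearMap.funLeft ℚ ℚ (H.connectedComponentMk ∘ f)
  have hinf : pullG.range ⊓ pullf.range ≤ pullH.range := by
    rintro _ ⟨hG, w, rfl⟩
    have hw : IsEdgeConstant H w :=
      .of_comp hlift (isEdgeConstant_iff_exists_comp_connectedComponentMk.2 hG)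
    obtain ⟨u, rfl⟩ := isEdgeConstant_iff_exists_comp_connectedComponentMk.1 hw
    exact ⟨u, rfl⟩
  have hsurjG : Function.Surjective G.connectedComponentMk := Quot.mk_surjective
  have hrankG : Module.finrank ℚ pullG.range = Nat.card G.ConnectedComponent := by
    rw [LinearMap.finrank_range_of_inj (LinearMap.funLeft_injective_of_surjective _ _ _ hsurjG),
      Module.finrank_fintype_fun_eq_card, Nat.card_eq_fintype_card]
  have hrankf : Module.finrank ℚ pullf.range = Nat.card W := by
    rw [LinearMap.finrank_range_of_inj (LinearMap.funLeft_injective_of_surjective _ _ _ hsurj),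
      Module.finrank_fintype_fun_eq_card, Nat.card_eq_fintype_card]
  calc Nat.card G.ConnectedComponent + Nat.card W
    _ = Module.finrank ℚ ↥(pullG.range ⊔ pullf.range) +
          Module.finrank ℚ ↥(pullG.range ⊓ pullf.range) := by
      rw [Submodule.finrank_sup_add_finrank_inf_eq, hrankG, hrankf]
    _ ≤ Module.finrank ℚ (V → ℚ) + Module.finrank ℚ (H.ConnectedComponent → ℚ) :=
      add_le_add (Submodule.finrank_le _)
        ((Submodule.finrank_mono hinf).trans (LinearMap.finrank_range_le pullH))
    _ = Nat.card H.ConnectedComponent + Nat.card V := by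
      simp only [Module.finrank_fintype_fun_eq_card, Nat.card_eq_fintype_card, add_comm]

section Expectation

variable {ι κ : Type*} [Fintype ι] [DecidableEq ι] [Fintype κ]

lemma sum_comp_subtypeVal_div_card_pow {𝕜 : Type*} [Field 𝕜] [CharZero 𝕜] [Nonempty κ]
    (V : Finset ι) (F : (V → κ) → 𝕜) :
    (∑ z : ι → κ, F fun i => z i) / (Fintype.card κ : 𝕜) ^ Fintype.card ι =
      (∑ z : V → κ, F z) / (Fintype.card κ : 𝕜) ^ V.card := by
  have hmarginal : ∑ z : ι → κ, F (fun i => z i) =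
      (∑ z : V → κ, F z) * (Fintype.card κ : 𝕜) ^ (Fintype.card ι - V.card) := by
    rw [← (Equiv.piEquivPiSubtypeProd (· ∈ V) fun _ => κ).symm.sum_comp]
    simp [Fintype.sum_prod_type, Finset.mul_sum, Fintype.card_subtype_compl, mul_comm]
  rw [hmarginal, ← Nat.sub_add_cancel V.card_le_univ, pow_add, Nat.add_sub_cancel]
  field_simp

lemma expectation_prod_edgeFinset_eq_zpow [Nonempty κ] (V : Finset ι) (G : SimpleGraph V) :
    (∑ z : ι → κ, ∏ e ∈ G.edgeFinset,
        (if ∀ i ∈ e, ∀ j ∈ e, z i.1 = z j.1 then (1 : ℝ) else 0)) /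
          (Fintype.card κ : ℝ) ^ Fintype.card ι =
      (Fintype.card κ : ℝ) ^ (-(V.card : ℤ) + Nat.card G.ConnectedComponent) := by
  have hκ : (Fintype.card κ : ℝ) ≠ 0 := Nat.cast_ne_zero.2 Fintype.card_ne_zero
  calc _ = (∑ z : ι → κ, if IsEdgeConstant G (fun i : V => z i) then (1 : ℝ) else 0) /
          (Fintype.card κ : ℝ) ^ Fintype.card ι := by
        congr! with z
        exact prod_edgeFinset_ite_eq_ite_isEdgeConstant fun i : V => z i
    _ = (∑ z : V → κ, if IsEdgeConstant G z then (1 : ℝ) else 0) /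
          (Fintype.card κ : ℝ) ^ V.card :=
        sum_comp_subtypeVal_div_card_pow V fun z => if IsEdgeConstant G z then (1 : ℝ) else 0
    _ = (Fintype.card κ : ℝ) ^ Nat.card G.ConnectedComponent / (Fintype.card κ : ℝ) ^ V.card := by
        rw [Finset.sum_boole, ← Fintype.card_subtype, ← Nat.card_eq_fintype_card,
          card_isEdgeConstant, Nat.card_eq_fintype_card (α := κ), Nat.cast_pow]
    _ = _ := by
        rw [zpow_add₀ hκ, zpow_neg, zpow_natCast, zpow_natCast, div_eq_inv_mul]

theorem statement17_general [Nonempty κ] {V W : Finset ι} {G : SimpleGraph V} {H : SimpleGraph W}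
    {f : V → W} (hsurj : Function.Surjective f)
    (hlift : ∀ a b, H.Adj a b → ∃ x y, f x = a ∧ f y = b ∧ G.Adj x y) :
    ((∑ z : ι → κ, ∏ e ∈ H.edgeFinset,
          (if ∀ i ∈ e, ∀ j ∈ e, z i.1 = z j.1 then (1 : ℝ) else 0)) /
            (Fintype.card κ : ℝ) ^ Fintype.card ι ≥
      (∑ z : ι → κ, ∏ e ∈ G.edgeFinset,
          (if ∀ i ∈ e, ∀ j ∈ e, z i.1 = z j.1 then (1 : ℝ) else 0)) /
            (Fintype.card κ : ℝ) ^ Fintype.card ι) ∧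
    (Fintype.card κ : ℝ) ^ (-(W.card : ℤ) + Nat.card H.ConnectedComponent) ≥
      (Fintype.card κ : ℝ) ^ (-(V.card : ℤ) + Nat.card G.ConnectedComponent) := by
  rw [expectation_prod_edgeFinset_eq_zpow, expectation_prod_edgeFinset_eq_zpow, and_self]
  have hκ : (1 : ℝ) ≤ Fintype.card κ := Nat.one_le_cast.2 Fintype.card_pos
  have hcard := card_connectedComponent_add_card_le hsurj hlift
  rw [Nat.card_eq_finsetCard, Nat.card_eq_finsetCard] at hcard
  exact zpow_le_zpow_right₀ hκ (by omega)

end Expectation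

/-- Merging vertices of a graph on (a subset of) `{1,…,N}` can only increase the probability,
under i.i.d. uniform labels `z : Fin N → Fin K`, that the labels are monochromatic along all
edges; equivalently `K^{-|V(H)|+#CC(H)} ≥ K^{-|V(H̄)|+#CC(H̄)}`. -/
theorem statement17 (N K : ℕ) (hK : 1 ≤ K)
    (V1 V2 : Finset (Fin N)) (hsub : V2 ⊆ V1)
    (Hbar : SimpleGraph ↥V1) (H : SimpleGraph ↥V2)
    (f : ↥V1 → ↥V2) (hsurj : Function.Surjective f)
    (hret : ∀ v : ↥V2, f ⟨v.1, hsub v.2⟩ = v)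
    (hadj : ∀ a b : ↥V2, H.Adj a b ↔ a ≠ b ∧ ∃ x y : ↥V1, f x = a ∧ f y = b ∧ Hbar.Adj x y) :
    ((∑ z : Fin N → Fin K, ∏ e ∈ H.edgeFinset,
          (if ∀ i ∈ e, ∀ j ∈ e, z i.1 = z j.1 then (1 : ℝ) else 0)) / (K : ℝ) ^ N ≥
      (∑ z : Fin N → Fin K, ∏ e ∈ Hbar.edgeFinset,
          (if ∀ i ∈ e, ∀ j ∈ e, z i.1 = z j.1 then (1 : ℝ) else 0)) / (K : ℝ) ^ N) ∧
    (K : ℝ) ^ (-(V2.card : ℤ) + Nat.card H.ConnectedComponent) ≥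
      (K : ℝ) ^ (-(V1.card : ℤ) + Nat.card Hbar.ConnectedComponent) := by
  have : Nonempty (Fin K) := ⟨0, hK⟩
  simpa using statement17_general (κ := Fin K) hsurj fun a b hab => ((hadj a b).1 hab).2
end
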